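/- arXiv:2202.04634 — 2 statements merged into one kernel-verified Lean document; each statement's English description precedes it below -/
import Mathlib

section
/- Fix ε > 0, B_w > 1, δ ∈ (0,1). Suppose d^D = d^{π_D}, and that for α = α'_ε := ε/(4B_f): v*_{α'_ε,B_w} ∈ V, w*_{α'_ε,B_w} ∈ W, 0 ≤ w ≤ B_w for all w ∈ W, f is M_f-strongly convex with |f'| ≤ B_{f'} and |f| ≤ B_f on [0,B_w], and ‖v‖_∞ ≤ B_v = (α'_ε·B_{f'}+1)/(1−γ) for all v ∈ V. Then there is a universal constant C1 such that if n ≥ C1·(ε·B_f + 4·B_w·B_e·B_f)²/(ε⁶·M_f²·(1−γ)⁴)·log(4|V||W|/δ) and n0 ≥ C1·(4·B_v·B_f)²/(ε⁶·M_f²·(1−γ)²)·log(4|V|/δ), the output π̂ of PRO-RL with input α = α'_ε satisfies J(π*_{0,B_w}) − J(π̂) ≤ ε with probability at least 1−δ, where B_e = (1+γ)B_v+1. -/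
open MeasureTheory
open scoped BigOperators ENNReal

namespace ProRL

/-- The discrete measure on a type induced by a real-valued weight function. -/
noncomputable def discMeasure {X : Type*} [MeasurableSpace X] (p : X → ℝ) : Measure X :=
  Measure.sum fun x => ENNReal.ofReal (p x) • Measure.dirac x

variable {S A : Type*} [Fintype S] [Fintype A]

/-- The `t`-step state-action distribution of policy `π` started from `μ0`. -/
noncomputable def saDist (P : S → A → S → ℝ) (μ0 : S → ℝ) (π : S → A → ℝ) :
    ℕ → S → A → ℝ
  | 0 => fun s a => μ0 s * π s a
  | t + 1 => fun s a =>
      (∑ s' : S, ∑ a' : A, saDist P μ0 π t s' a' * P s' a' s) * π s a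

/-- The discounted state-action occupancy `d^π(s,a)`. -/
noncomputable def occ (P : S → A → S → ℝ) (μ0 : S → ℝ) (γ : ℝ) (π : S → A → ℝ)
    (s : S) (a : A) : ℝ :=
  (1 - γ) * ∑' t : ℕ, γ ^ t * saDist P μ0 π t s a

/-- The (normalized) expected discounted return `J(π) = E_{d^π}[r]`. -/
noncomputable def Jret (P : S → A → S → ℝ) (r : S → A → ℝ) (μ0 : S → ℝ) (γ : ℝ)
    (π : S → A → ℝ) : ℝ :=
  ∑ s : S, ∑ a : A, occ P μ0 γ π s a * r s a

/-- `π` is a (stationary, stochastic) policy. -/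
def IsPolicy (π : S → A → ℝ) : Prop :=
  (∀ s a, 0 ≤ π s a) ∧ ∀ s, ∑ a : A, π s a = 1

/-- The Bellman residual `e_v(s,a) = r(s,a) + γ ∑_{s'} P(s'|s,a) v(s') − v(s)`. -/
noncomputable def eV (P : S → A → S → ℝ) (r : S → A → ℝ) (γ : ℝ) (v : S → ℝ)
    (s : S) (a : A) : ℝ :=
  r s a + γ * ∑ s' : S, P s a s' * v s' - v s

/-- The population Lagrangian `L_α(v,w)`. -/
noncomputable def Lag (P : S → A → S → ℝ) (r : S → A → ℝ) (μ0 : S → ℝ) (γ : ℝ)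
    (dD : S → A → ℝ) (f : ℝ → ℝ) (α : ℝ) (v : S → ℝ) (w : S → A → ℝ) : ℝ :=
  (1 - γ) * ∑ s : S, μ0 s * v s
    - α * ∑ s : S, ∑ a : A, dD s a * f (w s a)
    + ∑ s : S, ∑ a : A, dD s a * (w s a * eV P r γ v s a)

/-- The empirical Lagrangian `L̂_α(v,w)` built from the transition dataset `D`
(`D i = ((sᵢ,aᵢ), s'ᵢ)`, with `rᵢ = r sᵢ aᵢ`) and initial-state dataset `D0`. -/
noncomputable def empLag (r : S → A → ℝ) (γ : ℝ) (f : ℝ → ℝ) (α : ℝ) {n n0 : ℕ}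
    (D : Fin n → (S × A) × S) (D0 : Fin n0 → S) (v : S → ℝ) (w : S → A → ℝ) : ℝ :=
  (1 - γ) * ((n0 : ℝ)⁻¹ * ∑ j : Fin n0, v (D0 j))
    - α * ((n : ℝ)⁻¹ * ∑ i : Fin n, f (w (D i).1.1 (D i).1.2))
    + (n : ℝ)⁻¹ * ∑ i : Fin n,
        w (D i).1.1 (D i).1.2 *
          (r (D i).1.1 (D i).1.2 + γ * v (D i).2 - v (D i).1.1)

/-- Per-state normalization of a state-action weight into a policy
(uniform where the state marginal is not positive). -/
noncomputable def normPolicy (d : S → A → ℝ) (s : S) (a : A) : ℝ :=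
  if 0 < ∑ a' : A, d s a' then d s a / ∑ a' : A, d s a'
  else (Fintype.card A : ℝ)⁻¹

/-- Policy extraction from a density ratio `w` and a behavior policy `piD`
(uniform where the normalizer vanishes). -/
noncomputable def extractPolicy (piD w : S → A → ℝ) (s : S) (a : A) : ℝ :=
  if 0 < ∑ a' : A, w s a' * piD s a' then
    w s a * piD s a / ∑ a' : A, w s a' * piD s a'
  else (Fintype.card A : ℝ)⁻¹

/-- Behavior policy `π_D(a|s)` obtained from the data distribution `d^D`. -/
noncomputable def behPolicy (dD : S → A → ℝ) : S → A → ℝ := normPolicy dD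

/-- The state-action measure `d(s,a) = w(s,a)·d^D(s,a)`. -/
noncomputable def dstar (dD w : S → A → ℝ) : S → A → ℝ := fun s a => w s a * dD s a

/-- The weighted `L²(d^D)` norm of a state-action function. -/
noncomputable def l2nrm (dD g : S → A → ℝ) : ℝ :=
  Real.sqrt (∑ s : S, ∑ a : A, dD s a * g s a ^ 2)

/-- `‖π(·|s) − π'(·|s)‖₁`. -/
noncomputable def l1Pol (π π' : S → A → ℝ) (s : S) : ℝ := ∑ a : A, |π s a - π' s a|

/-- `E_{s ∼ d}[‖π(·|s) − π'(·|s)‖₁]` where `d` is a state-action distribution. -/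
noncomputable def expL1 (d π π' : S → A → ℝ) : ℝ :=
  ∑ s : S, (∑ a : A, d s a) * l1Pol π π' s

/-- The statistical error term `ε_stat`. -/
noncomputable def epsStat (γ α Bv Bf Bw Be δ : ℝ) (nV nW n n0 : ℕ) : ℝ :=
  (1 - γ) * Bv * Real.sqrt (2 * Real.log (4 * (nV : ℝ) / δ) / (n0 : ℝ))
    + (α * Bf + Bw * Be) *
        Real.sqrt (2 * Real.log (4 * ((nV : ℝ) * (nW : ℝ)) / δ) / (n : ℝ))

/-- The Bellman flow equations for a state-action measure `d`. -/
def BellmanFlow (P : S → A → S → ℝ) (μ0 : S → ℝ) (γ : ℝ) (d : S → A → ℝ) : Prop :=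
  ∀ s : S, ∑ a : A, d s a
    = (1 - γ) * μ0 s + γ * ∑ s' : S, ∑ a' : A, P s' a' s * d s' a'

/-- `(v,w)` is a saddle point of `max_{w ≥ 0} min_v L_α(v,w)`. -/
def IsSaddle (P : S → A → S → ℝ) (r : S → A → ℝ) (μ0 : S → ℝ) (γ : ℝ)
    (dD : S → A → ℝ) (f : ℝ → ℝ) (α : ℝ) (v : S → ℝ) (w : S → A → ℝ) : Prop :=
  (∀ s a, 0 ≤ w s a) ∧
  (∀ v' : S → ℝ, Lag P r μ0 γ dD f α v w ≤ Lag P r μ0 γ dD f α v' w) ∧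
  (∀ w' : S → A → ℝ, (∀ s a, 0 ≤ w' s a) →
    Lag P r μ0 γ dD f α v w' ≤ Lag P r μ0 γ dD f α v w)

/-- `(v,w)` is a saddle point of `max_{0 ≤ w ≤ Bw} min_v L_α(v,w)` (constrained LP). -/
def IsSaddleB (P : S → A → S → ℝ) (r : S → A → ℝ) (μ0 : S → ℝ) (γ : ℝ)
    (dD : S → A → ℝ) (f : ℝ → ℝ) (α Bw : ℝ) (v : S → ℝ) (w : S → A → ℝ) : Prop :=
  (∀ s a, 0 ≤ w s a ∧ w s a ≤ Bw) ∧
  (∀ v' : S → ℝ, Lag P r μ0 γ dD f α v w ≤ Lag P r μ0 γ dD f α v' w) ∧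
  (∀ w' : S → A → ℝ, (∀ s a, 0 ≤ w' s a ∧ w' s a ≤ Bw) →
    Lag P r μ0 γ dD f α v w' ≤ Lag P r μ0 γ dD f α v w)

/-- `(vhat, what)` is an exact max-min point of the empirical Lagrangian over `V × W`:
`vhat ∈ argmin_{v ∈ V} L̂(v, what)` and `what ∈ argmax_{w ∈ W} min_{v ∈ V} L̂(v, w)`. -/
def IsProRLOutput (r : S → A → ℝ) (γ : ℝ) (f : ℝ → ℝ) (α : ℝ)
    (V : Finset (S → ℝ)) (W : Finset (S → A → ℝ)) {n n0 : ℕ}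
    (D : Fin n → (S × A) × S) (D0 : Fin n0 → S)
    (vhat : S → ℝ) (what : S → A → ℝ) : Prop :=
  vhat ∈ V ∧ what ∈ W ∧
  (∀ v ∈ V, empLag r γ f α D D0 vhat what ≤ empLag r γ f α D D0 v what) ∧
  ∀ w ∈ W, ∀ vw ∈ V,
    (∀ v ∈ V, empLag r γ f α D D0 vw w ≤ empLag r γ f α D D0 v w) →
      empLag r γ f α D D0 vw w ≤ empLag r γ f α D D0 vhat what

/-- Weight of a transition tuple `((s,a),s')` under `(s,a) ∼ d^D`, `s' ∼ P(·|s,a)`. -/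
noncomputable def tupleWeight (P : S → A → S → ℝ) (dD : S → A → ℝ)
    (x : (S × A) × S) : ℝ :=
  dD x.1.1 x.1.2 * P x.1.1 x.1.2 x.2

/-- The joint law of the transition dataset `D` (i.i.d. from `d^D ⊗ P`) and the
initial-state dataset `D0` (i.i.d. from `μ0`). -/
noncomputable def dataMeasure [MeasurableSpace S] [MeasurableSpace A]
    (P : S → A → S → ℝ) (dD : S → A → ℝ) (μ0 : S → ℝ) (n n0 : ℕ) :
    Measure ((Fin n → (S × A) × S) × (Fin n0 → S)) :=
  (Measure.pi fun _ : Fin n => discMeasure (tupleWeight P dD)).prod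
    (Measure.pi fun _ : Fin n0 => discMeasure μ0)

/-- The joint law of datasets `D1`, `D2` (both i.i.d. from `d^D ⊗ P`) and `D0`
(i.i.d. from `μ0`), used by PRO-RL-BC. -/
noncomputable def dataMeasure3 [MeasurableSpace S] [MeasurableSpace A]
    (P : S → A → S → ℝ) (dD : S → A → ℝ) (μ0 : S → ℝ) (n1 n2 n0 : ℕ) :
    Measure ((Fin n1 → (S × A) × S) × (Fin n2 → (S × A) × S) × (Fin n0 → S)) :=
  (Measure.pi fun _ : Fin n1 => discMeasure (tupleWeight P dD)).prod
    ((Measure.pi fun _ : Fin n2 => discMeasure (tupleWeight P dD)).prod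
      (Measure.pi fun _ : Fin n0 => discMeasure μ0))

/-- `v` is the optimal value function: it satisfies the Bellman optimality equation. -/
def IsOptValue [Nonempty A] (P : S → A → S → ℝ) (r : S → A → ℝ) (γ : ℝ)
    (v : S → ℝ) : Prop :=
  ∀ s : S, v s = Finset.univ.sup' Finset.univ_nonempty
    (fun a : A => r s a + γ * ∑ s' : S, P s a s' * v s')

/-- Basic assumptions on the MDP, the regularizer-free data, and the data distribution. -/
structure MDPAssumptions (P : S → A → S → ℝ) (r : S → A → ℝ) (μ0 : S → ℝ) (γ : ℝ)
    (dD : S → A → ℝ) : Prop where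
  P_nonneg : ∀ s a s', 0 ≤ P s a s'
  P_sum : ∀ s a, ∑ s' : S, P s a s' = 1
  r_nonneg : ∀ s a, 0 ≤ r s a
  r_le_one : ∀ s a, r s a ≤ 1
  γ_nonneg : 0 ≤ γ
  γ_lt_one : γ < 1
  μ0_pos : ∀ s, 0 < μ0 s
  μ0_sum : ∑ s : S, μ0 s = 1
  dD_nonneg : ∀ s a, 0 ≤ dD s a
  dD_sum : ∑ s : S, ∑ a : A, dD s a = 1

/-- Regularity of the regularizer `f`: continuously differentiable with derivative `f'`,
`M_f`-strongly convex, and with `|f'| ≤ Bf'`, `|f| ≤ Bf` on `[0, Bw]`. -/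
structure RegAssumptions (f f' : ℝ → ℝ) (Mf Bw Bf' Bf : ℝ) : Prop where
  deriv : ∀ x, HasDerivAt f (f' x) x
  strong : StrongConvexOn Set.univ Mf f
  Mf_pos : 0 < Mf
  f'_bdd : ∀ x, 0 ≤ x → x ≤ Bw → |f' x| ≤ Bf'
  f_bdd : ∀ x, 0 ≤ x → x ≤ Bw → |f x| ≤ Bf

/-- `w` is an optimal density ratio of the unregularized LP (the set `W*₀`). -/
def OptRatio (P : S → A → S → ℝ) (r : S → A → ℝ) (μ0 : S → ℝ) (γ : ℝ)
    (dD : S → A → ℝ) (w : S → A → ℝ) : Prop :=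
  (∀ s a, 0 ≤ w s a) ∧ BellmanFlow P μ0 γ (dstar dD w) ∧
  ∀ w' : S → A → ℝ, (∀ s a, 0 ≤ w' s a) → BellmanFlow P μ0 γ (dstar dD w') →
    ∑ s : S, ∑ a : A, dstar dD w' s a * r s a
      ≤ ∑ s : S, ∑ a : A, dstar dD w s a * r s a

section Occupancy

variable {P : S → A → S → ℝ} {r : S → A → ℝ} {μ0 : S → ℝ} {γ : ℝ} {dD : S → A → ℝ}
  {π : S → A → ℝ}

lemma saDist_nonneg (hP : ∀ s a s', 0 ≤ P s a s') (hμ : ∀ s, 0 ≤ μ0 s) (hπ : IsPolicy π)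
    (t : ℕ) (s : S) (a : A) : 0 ≤ saDist P μ0 π t s a := by
  induction t generalizing s a with
  | zero => exact mul_nonneg (hμ s) (hπ.1 s a)
  | succ t ih =>
    exact mul_nonneg (Finset.sum_nonneg fun s' _ => Finset.sum_nonneg fun a' _ =>
      mul_nonneg (ih s' a') (hP s' a' s)) (hπ.1 s a)

lemma sum_saDist (hP : ∀ s a, ∑ s' : S, P s a s' = 1) (hμ : ∑ s : S, μ0 s = 1)
    (hπ : IsPolicy π) (t : ℕ) : ∑ s : S, ∑ a : A, saDist P μ0 π t s a = 1 := by
  induction t with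
  | zero => simp [saDist, ← Finset.mul_sum, hπ.2, hμ]
  | succ t ih =>
    simp only [saDist, ← Finset.mul_sum, hπ.2, mul_one]
    rw [Finset.sum_comm]
    simp_rw [Finset.sum_comm (s := (Finset.univ : Finset S)) (t := (Finset.univ : Finset A)),
      ← Finset.mul_sum, hP, mul_one]
    rw [Finset.sum_comm]
    exact ih

lemma summable_discounted_saDist (h : MDPAssumptions P r μ0 γ dD) (hπ : IsPolicy π)
    (s : S) (a : A) : Summable fun t : ℕ => γ ^ t * saDist P μ0 π t s a := by
  have hnn := saDist_nonneg (P := P) h.P_nonneg (fun s => (h.μ0_pos s).le) hπ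
  refine Summable.of_nonneg_of_le (fun t => mul_nonneg (pow_nonneg h.γ_nonneg t) (hnn t s a))
    (fun t => ?_) (summable_geometric_of_lt_one h.γ_nonneg h.γ_lt_one)
  refine mul_le_of_le_one_right (pow_nonneg h.γ_nonneg t) ?_
  rw [← sum_saDist (P := P) h.P_sum h.μ0_sum hπ t]
  calc saDist P μ0 π t s a ≤ ∑ a, saDist P μ0 π t s a :=
        Finset.single_le_sum (f := fun a => saDist P μ0 π t s a)
          (fun a _ => hnn t s a) (Finset.mem_univ a)
    _ ≤ ∑ s, ∑ a, saDist P μ0 π t s a :=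
        Finset.single_le_sum (f := fun s => ∑ a, saDist P μ0 π t s a)
          (fun s _ => Finset.sum_nonneg fun a _ => hnn t s a) (Finset.mem_univ s)

lemma occ_eq_flow_mul_policy (h : MDPAssumptions P r μ0 γ dD) (hπ : IsPolicy π)
    (s : S) (a : A) :
    occ P μ0 γ π s a = ((1 - γ) * μ0 s
      + γ * ∑ s' : S, ∑ a' : A, P s' a' s * occ P μ0 γ π s' a') * π s a := by
  have hsum := summable_discounted_saDist h hπ
  have key : HasSum (fun t : ℕ => γ ^ (t + 1) * saDist P μ0 π (t + 1) s a)
      (γ * (∑ s' : S, ∑ a' : A,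
        P s' a' s * ∑' t : ℕ, γ ^ t * saDist P μ0 π t s' a') * π s a) := by
    have := ((hasSum_sum (s := Finset.univ) fun s' _ => hasSum_sum (s := Finset.univ)
      fun a' _ => (hsum s' a').hasSum.mul_left (P s' a' s)).mul_left γ).mul_right (π s a)
    refine this.congr_fun ?_
    intro t
    simp only [saDist, pow_succ, Finset.mul_sum, Finset.sum_mul]
    refine Finset.sum_congr rfl fun s' _ => Finset.sum_congr rfl fun a' _ => ?_
    ring
  rw [occ, (hsum s a).tsum_eq_zero_add, key.tsum_eq]
  have : ∑ s' : S, ∑ a' : A, P s' a' s * occ P μ0 γ π s' a'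
      = (1 - γ) * ∑ s' : S, ∑ a' : A,
        P s' a' s * ∑' t : ℕ, γ ^ t * saDist P μ0 π t s' a' := by
    simp only [occ, Finset.mul_sum]
    refine Finset.sum_congr rfl fun s' _ => Finset.sum_congr rfl fun a' _ => ?_
    ring
  rw [this]
  simp only [saDist]
  ring

/-- A flow `d` is close to the occupancy of `π` when `d` nearly factors through `π`. -/
lemma BellmanFlow.sum_abs_sub_occ_le {d : S → A → ℝ} (h : MDPAssumptions P r μ0 γ dD)
    (hd : BellmanFlow P μ0 γ d) (hπ : IsPolicy π) :
    (1 - γ) * ∑ s : S, ∑ a : A, |d s a - occ P μ0 γ π s a|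
      ≤ ∑ s : S, ∑ a : A, |d s a - (∑ a' : A, d s a') * π s a| := by
  set q : S → ℝ := fun s => (1 - γ) * μ0 s
      + γ * ∑ s' : S, ∑ a' : A, P s' a' s * occ P μ0 γ π s' a' with hq
  have hocc : ∀ s a, occ P μ0 γ π s a = q s * π s a := occ_eq_flow_mul_policy h hπ
  have hstate : ∀ s, |(∑ a, d s a) - q s|
      ≤ γ * ∑ s' : S, ∑ a' : A, P s' a' s * |d s' a' - occ P μ0 γ π s' a'| := by
    intro s
    have : (∑ a, d s a) - q s
        = γ * ∑ s' : S, ∑ a' : A, P s' a' s * (d s' a' - occ P μ0 γ π s' a') := by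
      rw [hd s]
      simp only [hq, mul_sub, Finset.sum_sub_distrib]
      ring
    rw [this, abs_mul, abs_of_nonneg h.γ_nonneg]
    refine mul_le_mul_of_nonneg_left ?_ h.γ_nonneg
    refine (Finset.abs_sum_le_sum_abs _ _).trans (Finset.sum_le_sum fun s' _ => ?_)
    refine (Finset.abs_sum_le_sum_abs _ _).trans (Finset.sum_le_sum fun a' _ => ?_)
    rw [abs_mul, abs_of_nonneg (h.P_nonneg _ _ _)]
  have hmarg : ∑ s, |(∑ a, d s a) - q s|
      ≤ γ * ∑ s' : S, ∑ a' : A, |d s' a' - occ P μ0 γ π s' a'| := by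
    refine (Finset.sum_le_sum fun s _ => hstate s).trans (le_of_eq ?_)
    rw [← Finset.mul_sum, Finset.sum_comm]
    congr 1
    refine Finset.sum_congr rfl fun s' _ => ?_
    rw [Finset.sum_comm]
    refine Finset.sum_congr rfl fun a' _ => ?_
    rw [← Finset.sum_mul, h.P_sum, one_mul]
  have htri : ∑ s : S, ∑ a : A, |d s a - occ P μ0 γ π s a|
      ≤ ∑ s : S, ∑ a : A, |d s a - (∑ a' : A, d s a') * π s a|
        + ∑ s, |(∑ a, d s a) - q s| := by
    rw [← Finset.sum_add_distrib]
    refine Finset.sum_le_sum fun s _ => ?_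
    have : |(∑ a, d s a) - q s| = ∑ a, |(∑ a, d s a) - q s| * π s a := by
      rw [← Finset.mul_sum, hπ.2, mul_one]
    rw [this, ← Finset.sum_add_distrib]
    refine Finset.sum_le_sum fun a _ => ?_
    have e : d s a - occ P μ0 γ π s a = (d s a - (∑ a' : A, d s a') * π s a)
        + ((∑ a', d s a') - q s) * π s a := by rw [hocc]; ring
    rw [e]
    refine (abs_add_le _ _).trans ?_
    rw [abs_mul _ (π s a), abs_of_nonneg (hπ.1 s a)]
  linarith

lemma BellmanFlow.sum_mul_reward_sub_Jret_le {d : S → A → ℝ} (h : MDPAssumptions P r μ0 γ dD)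
    (hd : BellmanFlow P μ0 γ d) (hπ : IsPolicy π) :
    (1 - γ) * |(∑ s : S, ∑ a : A, d s a * r s a) - Jret P r μ0 γ π|
      ≤ ∑ s : S, ∑ a : A, |d s a - (∑ a' : A, d s a') * π s a| := by
  refine le_trans ?_ (hd.sum_abs_sub_occ_le h hπ)
  refine mul_le_mul_of_nonneg_left ?_ (sub_nonneg.2 h.γ_lt_one.le)
  have : (∑ s : S, ∑ a : A, d s a * r s a) - Jret P r μ0 γ π
      = ∑ s : S, ∑ a : A, (d s a - occ P μ0 γ π s a) * r s a := by
    simp only [Jret, sub_mul, Finset.sum_sub_distrib]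
  rw [this]
  refine (Finset.abs_sum_le_sum_abs _ _).trans (Finset.sum_le_sum fun s _ => ?_)
  refine (Finset.abs_sum_le_sum_abs _ _).trans (Finset.sum_le_sum fun a _ => ?_)
  rw [abs_mul, abs_of_nonneg (h.r_nonneg s a)]
  exact mul_le_of_le_one_right (abs_nonneg _) (h.r_le_one s a)

end Occupancy

section PolicyExtraction

lemma behPolicy_nonneg {S A : Type*} [Fintype A] {dD : S → A → ℝ}
    (hdD : ∀ s a, 0 ≤ dD s a) (s : S) (a : A) : 0 ≤ behPolicy dD s a := by
  unfold behPolicy normPolicy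
  split_ifs with hpos
  · exact div_nonneg (hdD s a) hpos.le
  · positivity

lemma isPolicy_extractPolicy {S A : Type*} [Fintype A] [Nonempty A] {piD w : S → A → ℝ}
    (hpi : ∀ s a, 0 ≤ piD s a) (hw : ∀ s a, 0 ≤ w s a) : IsPolicy (extractPolicy piD w) := by
  constructor
  · intro s a
    unfold extractPolicy
    split_ifs with hpos
    · exact div_nonneg (mul_nonneg (hw s a) (hpi s a)) hpos.le
    · positivity
  · intro s
    unfold extractPolicy
    split_ifs with hpos
    · rw [← Finset.sum_div, div_self hpos.ne']
    · simp

/-- The extracted policy is the conditional of the measure `w · d^D`. -/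
lemma sum_dstar_mul_extractPolicy {S A : Type*} [Fintype A] {dD w : S → A → ℝ}
    (hdD : ∀ s a, 0 ≤ dD s a) (hw : ∀ s a, 0 ≤ w s a) (s : S) (a : A) :
    (∑ a' : A, dstar dD w s a') * extractPolicy (behPolicy dD) w s a = dstar dD w s a := by
  by_cases hm : 0 < ∑ a', dD s a'
  · have hb : ∀ a, dD s a = (∑ a', dD s a') * behPolicy dD s a := by
      intro a
      rw [behPolicy, normPolicy, if_pos hm, mul_div_cancel₀ _ hm.ne']
    set m := ∑ a', dD s a'
    have hd : ∀ a, dstar dD w s a = m * (w s a * behPolicy dD s a) := by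
      intro a
      rw [dstar, hb a]
      ring
    simp only [hd, ← Finset.mul_sum]
    unfold extractPolicy
    split_ifs with hpos
    · rw [mul_assoc, mul_div_cancel₀ _ hpos.ne']
    · have hnn : ∀ a ∈ Finset.univ, 0 ≤ w s a * behPolicy dD s a := fun a _ =>
        mul_nonneg (hw s a) (behPolicy_nonneg hdD s a)
      have h0 := le_antisymm (not_lt.1 hpos) (Finset.sum_nonneg hnn)
      rw [h0, (Finset.sum_eq_zero_iff_of_nonneg hnn).1 h0 a (Finset.mem_univ a)]
      simp
  · have h0 : ∀ a, dD s a = 0 := fun a =>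
      (Finset.sum_eq_zero_iff_of_nonneg fun a _ => hdD s a).1
        (le_antisymm (not_lt.1 hm) (Finset.sum_nonneg fun a _ => hdD s a)) a (Finset.mem_univ a)
    simp [dstar, h0]

end PolicyExtraction

section Return

variable {P : S → A → S → ℝ} {r : S → A → ℝ} {μ0 : S → ℝ} {γ : ℝ} {dD w w' : S → A → ℝ}

lemma Jret_extractPolicy [Nonempty A] (h : MDPAssumptions P r μ0 γ dD)
    (hw : ∀ s a, 0 ≤ w s a) (hflow : BellmanFlow P μ0 γ (dstar dD w)) :
    Jret P r μ0 γ (extractPolicy (behPolicy dD) w)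
      = ∑ s : S, ∑ a : A, dstar dD w s a * r s a := by
  have hle := hflow.sum_mul_reward_sub_Jret_le h
    (isPolicy_extractPolicy (behPolicy_nonneg h.dD_nonneg) hw)
  simp only [sum_dstar_mul_extractPolicy h.dD_nonneg hw, sub_self, abs_zero,
    Finset.sum_const_zero] at hle
  have hγ : 0 < 1 - γ := sub_pos.2 h.γ_lt_one
  have := nonpos_of_mul_nonpos_right hle hγ
  linarith [abs_eq_zero.1 (le_antisymm this (abs_nonneg _))]

lemma Jret_extractPolicy_sub_le [Nonempty A] (h : MDPAssumptions P r μ0 γ dD)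
    (hw : ∀ s a, 0 ≤ w s a) (hflow : BellmanFlow P μ0 γ (dstar dD w))
    (hw' : ∀ s a, 0 ≤ w' s a) :
    (1 - γ) * (Jret P r μ0 γ (extractPolicy (behPolicy dD) w)
        - Jret P r μ0 γ (extractPolicy (behPolicy dD) w'))
      ≤ 2 * ∑ s : S, ∑ a : A, dD s a * |w s a - w' s a| := by
  have hγ : 0 ≤ 1 - γ := sub_nonneg.2 h.γ_lt_one.le
  have hπ := isPolicy_extractPolicy (behPolicy_nonneg h.dD_nonneg) hw'
  rw [Jret_extractPolicy h hw hflow]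
  refine (mul_le_mul_of_nonneg_left (le_abs_self _) hγ).trans
    ((hflow.sum_mul_reward_sub_Jret_le h hπ).trans ?_)
  rw [Finset.mul_sum]
  refine Finset.sum_le_sum fun s _ => ?_
  have hdiff : ∀ a, |dstar dD w s a - dstar dD w' s a| = dD s a * |w s a - w' s a| := by
    intro a
    rw [dstar, dstar, ← sub_mul, abs_mul, abs_of_nonneg (h.dD_nonneg s a), mul_comm]
  have hmass : |(∑ a, dstar dD w' s a) - ∑ a, dstar dD w s a|
      ≤ ∑ a, dD s a * |w s a - w' s a| := by
    rw [abs_sub_comm, ← Finset.sum_sub_distrib]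
    exact (Finset.abs_sum_le_sum_abs _ _).trans (Finset.sum_le_sum fun a _ => (hdiff a).le)
  set π' := extractPolicy (behPolicy dD) w'
  calc ∑ a, |dstar dD w s a - (∑ a', dstar dD w s a') * π' s a|
      ≤ ∑ a, (dD s a * |w s a - w' s a|
          + |(∑ a, dstar dD w' s a) - ∑ a, dstar dD w s a| * π' s a) := by
        refine Finset.sum_le_sum fun a _ => ?_
        have e : dstar dD w s a - (∑ a', dstar dD w s a') * π' s a
            = (dstar dD w s a - dstar dD w' s a)
              + ((∑ a, dstar dD w' s a) - ∑ a, dstar dD w s a) * π' s a := by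
          rw [← sum_dstar_mul_extractPolicy h.dD_nonneg hw' s a]
          ring
        rw [e, ← hdiff a]
        refine (abs_add_le _ _).trans ?_
        rw [abs_mul _ (π' s a), abs_of_nonneg (hπ.1 s a)]
    _ ≤ 2 * ∑ a, dD s a * |w s a - w' s a| := by
        rw [Finset.sum_add_distrib, ← Finset.mul_sum, hπ.2]
        linarith

lemma sq_sum_mul_abs_le (h : MDPAssumptions P r μ0 γ dD) (g : S → A → ℝ) :
    (∑ s : S, ∑ a : A, dD s a * |g s a|) ^ 2 ≤ ∑ s : S, ∑ a : A, dD s a * g s a ^ 2 := by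
  have hcs := Finset.sum_sq_le_sum_mul_sum_of_sq_le_mul (Finset.univ : Finset (S × A))
    (r := fun x => dD x.1 x.2 * |g x.1 x.2|) (f := fun x => dD x.1 x.2)
    (g := fun x => dD x.1 x.2 * g x.1 x.2 ^ 2) (fun x _ => h.dD_nonneg _ _)
    (fun x _ => mul_nonneg (h.dD_nonneg _ _) (sq_nonneg _))
    (fun x _ => le_of_eq (by rw [mul_pow, sq_abs]; ring))
  simpa only [Fintype.sum_prod_type, h.dD_sum, one_mul] using hcs

end Return

section Lagrangian

variable {P : S → A → S → ℝ} {r : S → A → ℝ} {μ0 : S → ℝ} {γ : ℝ} {dD w : S → A → ℝ}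
  {f f' : ℝ → ℝ} {α Bw : ℝ} {v : S → ℝ}

/-- The Lagrangian is affine in `v`, with slope the Bellman flow residual. -/
lemma Lag_eq_add_residual (v : S → ℝ) (w : S → A → ℝ) :
    Lag P r μ0 γ dD f α v w
      = (∑ s : S, ∑ a : A, dstar dD w s a * r s a)
        - α * (∑ s : S, ∑ a : A, dD s a * f (w s a))
        + ∑ s : S, v s * ((1 - γ) * μ0 s
          + γ * (∑ s' : S, ∑ a' : A, P s' a' s * dstar dD w s' a')
          - ∑ a : A, dstar dD w s a) := by
  have h1 : ∑ s : S, ∑ a : A, dD s a * (w s a * eV P r γ v s a)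
      = (∑ s : S, ∑ a : A, dstar dD w s a * r s a)
        + (∑ s : S, ∑ a : A, ∑ s' : S, γ * (v s' * (P s a s' * dstar dD w s a)))
        - ∑ s : S, ∑ a : A, v s * dstar dD w s a := by
    simp only [← Finset.sum_add_distrib, ← Finset.sum_sub_distrib]
    refine Finset.sum_congr rfl fun s _ => Finset.sum_congr rfl fun a _ => ?_
    have : ∑ s' : S, γ * (v s' * (P s a s' * dstar dD w s a))
        = γ * (∑ s', P s a s' * v s') * dstar dD w s a := by
      rw [Finset.mul_sum, Finset.sum_mul]
      exact Finset.sum_congr rfl fun s' _ => by ring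
    rw [this, eV, dstar]
    ring
  have h2 : (∑ s : S, ∑ a : A, ∑ s' : S, γ * (v s' * (P s a s' * dstar dD w s a)))
      = ∑ s, v s * (γ * (∑ s' : S, ∑ a' : A, P s' a' s * dstar dD w s' a')) := by
    simp_rw [Finset.sum_comm (s := (Finset.univ : Finset A)) (t := (Finset.univ : Finset S))]
    rw [Finset.sum_comm]
    simp only [Finset.mul_sum]
    exact Finset.sum_congr rfl fun s _ => Finset.sum_congr rfl fun s' _ =>
      Finset.sum_congr rfl fun a _ => by ring
  rw [Lag, h1, h2]
  simp only [mul_add, mul_sub, Finset.sum_add_distrib, Finset.sum_sub_distrib]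
  have h3 : ∑ s, v s * ((1 - γ) * μ0 s) = (1 - γ) * ∑ s, μ0 s * v s := by
    rw [Finset.mul_sum]
    exact Finset.sum_congr rfl fun s _ => by ring
  have h4 : ∑ s, v s * ∑ a, dstar dD w s a = ∑ s, ∑ a, v s * dstar dD w s a := by
    simp only [Finset.mul_sum]
  rw [h3, h4]
  ring

lemma BellmanFlow.Lag_eq (hflow : BellmanFlow P μ0 γ (dstar dD w)) (v : S → ℝ) :
    Lag P r μ0 γ dD f α v w
      = (∑ s : S, ∑ a : A, dstar dD w s a * r s a)
        - α * (∑ s : S, ∑ a : A, dD s a * f (w s a)) := by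
  rw [Lag_eq_add_residual]
  refine add_eq_left.2 (Finset.sum_eq_zero fun s _ => ?_)
  rw [hflow s, sub_self, mul_zero]

lemma bellmanFlow_of_forall_Lag_le
    (hmin : ∀ v' : S → ℝ, Lag P r μ0 γ dD f α v w ≤ Lag P r μ0 γ dD f α v' w) :
    BellmanFlow P μ0 γ (dstar dD w) := by
  set g : S → ℝ := fun s => (1 - γ) * μ0 s
    + γ * (∑ s' : S, ∑ a' : A, P s' a' s * dstar dD w s' a') - ∑ a : A, dstar dD w s a with hg
  have hle := hmin fun s => v s - g s
  rw [Lag_eq_add_residual, Lag_eq_add_residual] at hle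
  change _ + ∑ s, v s * g s ≤ _ + ∑ s, (v s - g s) * g s at hle
  simp only [sub_mul, Finset.sum_sub_distrib] at hle
  have hnn : ∀ s ∈ Finset.univ, 0 ≤ g s * g s := fun s _ => mul_self_nonneg _
  have h0 : ∑ s, g s * g s = 0 := le_antisymm (by linarith) (Finset.sum_nonneg hnn)
  intro s
  have := mul_self_eq_zero.1 ((Finset.sum_eq_zero_iff_of_nonneg hnn).1 h0 s (Finset.mem_univ s))
  simp only [hg] at this
  linarith

/-- Quadratic growth of the Lagrangian away from its maximizer over the box. -/
lemma IsSaddleB.quadratic_growth {Mf : ℝ} (h : MDPAssumptions P r μ0 γ dD)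
    (hf : StrongConvexOn Set.univ Mf f) (hα : 0 ≤ α)
    (hsad : IsSaddleB P r μ0 γ dD f α Bw v w) {w' : S → A → ℝ}
    (hw' : ∀ s a, 0 ≤ w' s a ∧ w' s a ≤ Bw) :
    α * Mf / 4 * ∑ s : S, ∑ a : A, dD s a * (w s a - w' s a) ^ 2
      ≤ Lag P r μ0 γ dD f α v w - Lag P r μ0 γ dD f α v w' := by
  have hmax := hsad.2.2 (fun s a => (w s a + w' s a) / 2) fun s a =>
    ⟨by linarith [(hsad.1 s a).1, (hw' s a).1], by linarith [(hsad.1 s a).2, (hw' s a).2]⟩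
  have hconv : ∀ x y : ℝ, f ((x + y) / 2) ≤ f x / 2 + f y / 2 - Mf / 8 * (x - y) ^ 2 := by
    intro x y
    have := hf.2 (Set.mem_univ x) (Set.mem_univ y)
      (by norm_num : (0 : ℝ) ≤ 1 / 2) (by norm_num : (0 : ℝ) ≤ 1 / 2) (by norm_num)
    simp only [smul_eq_mul, Real.norm_eq_abs, sq_abs] at this
    rw [show (x + y) / 2 = 1 / 2 * x + 1 / 2 * y by ring]
    linarith
  have hsum : ∑ s : S, ∑ a : A, dD s a * f ((w s a + w' s a) / 2)
      ≤ (∑ s : S, ∑ a : A, dD s a * f (w s a)) / 2 + (∑ s : S, ∑ a : A, dD s a * f (w' s a)) / 2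
        - Mf / 8 * ∑ s : S, ∑ a : A, dD s a * (w s a - w' s a) ^ 2 := by
    simp only [Finset.sum_div, Finset.mul_sum, ← Finset.sum_add_distrib,
      ← Finset.sum_sub_distrib]
    refine Finset.sum_le_sum fun s _ => Finset.sum_le_sum fun a _ => ?_
    have := mul_le_mul_of_nonneg_left (hconv (w s a) (w' s a)) (h.dD_nonneg s a)
    linarith
  have hlin : ∑ s : S, ∑ a : A, dD s a * ((w s a + w' s a) / 2 * eV P r γ v s a)
      = (∑ s : S, ∑ a : A, dD s a * (w s a * eV P r γ v s a)) / 2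
        + (∑ s : S, ∑ a : A, dD s a * (w' s a * eV P r γ v s a)) / 2 := by
    simp only [Finset.sum_div, ← Finset.sum_add_distrib]
    exact Finset.sum_congr rfl fun s _ => Finset.sum_congr rfl fun a _ => by ring
  have hαsum := mul_le_mul_of_nonneg_left hsum hα
  simp only [Lag] at hmax ⊢
  rw [hlin] at hmax
  linarith

/-- Regularization changes the return of the saddle policy by at most `2 α B_f`. -/
lemma IsSaddleB.regularization_bias [Nonempty A] {Mf Bf' Bf : ℝ} {v0 : S → ℝ} {w0 : S → A → ℝ}
    (h : MDPAssumptions P r μ0 γ dD) (hf : RegAssumptions f f' Mf Bw Bf' Bf) (hα : 0 ≤ α)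
    (hsad0 : IsSaddleB P r μ0 γ dD f 0 Bw v0 w0) (hsad : IsSaddleB P r μ0 γ dD f α Bw v w) :
    Jret P r μ0 γ (extractPolicy (behPolicy dD) w0)
      - Jret P r μ0 γ (extractPolicy (behPolicy dD) w) ≤ 2 * α * Bf := by
  have hflow0 := bellmanFlow_of_forall_Lag_le hsad0.2.1
  have hflow := bellmanFlow_of_forall_Lag_le hsad.2.1
  rw [Jret_extractPolicy h (fun s a => (hsad0.1 s a).1) hflow0,
    Jret_extractPolicy h (fun s a => (hsad.1 s a).1) hflow]
  have hle := hsad.2.2 w0 hsad0.1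
  rw [hflow0.Lag_eq, hflow.Lag_eq] at hle
  have hbound : ∀ u : S → A → ℝ, (∀ s a, 0 ≤ u s a ∧ u s a ≤ Bw) →
      |∑ s : S, ∑ a : A, dD s a * f (u s a)| ≤ Bf := by
    intro u hu
    calc |∑ s : S, ∑ a : A, dD s a * f (u s a)| ≤ ∑ s : S, ∑ a : A, dD s a * Bf := by
          refine (Finset.abs_sum_le_sum_abs _ _).trans (Finset.sum_le_sum fun s _ => ?_)
          refine (Finset.abs_sum_le_sum_abs _ _).trans (Finset.sum_le_sum fun a _ => ?_)
          rw [abs_mul, abs_of_nonneg (h.dD_nonneg s a)]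
          exact mul_le_mul_of_nonneg_left (hf.f_bdd _ (hu s a).1 (hu s a).2) (h.dD_nonneg s a)
      _ = Bf := by simp only [← Finset.sum_mul, h.dD_sum, one_mul]
  have b0 := mul_le_mul_of_nonneg_left (abs_le.1 (hbound w0 hsad0.1)).2 hα
  have b1 := mul_le_mul_of_nonneg_left (abs_le.1 (hbound w hsad.1)).1 hα
  linarith

end Lagrangian

section Empirical

variable {P : S → A → S → ℝ} {r : S → A → ℝ} {μ0 : S → ℝ} {γ : ℝ} {dD w : S → A → ℝ}
  {f : ℝ → ℝ} {α Bw : ℝ} {v : S → ℝ} {n n0 : ℕ}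

/-- The contribution of one transition tuple to the empirical Lagrangian. -/
noncomputable def tupleTerm (r : S → A → ℝ) (γ : ℝ) (f : ℝ → ℝ) (α : ℝ) (v : S → ℝ)
    (w : S → A → ℝ) (x : (S × A) × S) : ℝ :=
  -(α * f (w x.1.1 x.1.2)) + w x.1.1 x.1.2 * (r x.1.1 x.1.2 + γ * v x.2 - v x.1.1)

lemma empLag_eq {S A : Type*} {r : S → A → ℝ} {γ : ℝ} {f : ℝ → ℝ} {α : ℝ} {n n0 : ℕ}
    (D : Fin n → (S × A) × S) (D0 : Fin n0 → S) (v : S → ℝ) (w : S → A → ℝ) :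
    empLag r γ f α D D0 v w = (1 - γ) * ((n0 : ℝ)⁻¹ * ∑ j, v (D0 j))
      + (n : ℝ)⁻¹ * ∑ i, tupleTerm r γ f α v w (D i) := by
  simp only [empLag, tupleTerm, Finset.sum_add_distrib, Finset.sum_neg_distrib,
    ← Finset.mul_sum]
  ring

lemma Lag_eq (h : MDPAssumptions P r μ0 γ dD) (v : S → ℝ) (w : S → A → ℝ) :
    Lag P r μ0 γ dD f α v w = (1 - γ) * ∑ s, μ0 s * v s
      + ∑ x, tupleWeight P dD x * tupleTerm r γ f α v w x := by
  have hcond : ∀ s a, ∑ s', tupleWeight P dD ((s, a), s') * tupleTerm r γ f α v w ((s, a), s')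
      = -(α * (dD s a * f (w s a))) + dD s a * (w s a * eV P r γ v s a) := by
    intro s a
    have e : ∀ s', tupleWeight P dD ((s, a), s') * tupleTerm r γ f α v w ((s, a), s')
        = P s a s' * (-(α * (dD s a * f (w s a))) + dD s a * (w s a * (r s a - v s)))
          + dD s a * w s a * γ * (P s a s' * v s') := by
      intro s'
      simp only [tupleWeight, tupleTerm]
      ring
    simp only [e, Finset.sum_add_distrib, ← Finset.sum_mul, h.P_sum, ← Finset.mul_sum, eV]
    ring
  simp only [Fintype.sum_prod_type, hcond, Finset.sum_add_distrib, Finset.sum_neg_distrib,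
    ← Finset.mul_sum, Lag]
  ring

lemma abs_tupleTerm_le {Bf Bv Be : ℝ} (h : MDPAssumptions P r μ0 γ dD) (hα : 0 ≤ α)
    (hf : ∀ x, 0 ≤ x → x ≤ Bw → |f x| ≤ Bf) (hBe : Be = (1 + γ) * Bv + 1)
    (hw : ∀ s a, 0 ≤ w s a ∧ w s a ≤ Bw) (hv : ∀ s, |v s| ≤ Bv) (x : (S × A) × S) :
    |tupleTerm r γ f α v w x| ≤ α * Bf + Bw * Be := by
  obtain ⟨⟨s, a⟩, s'⟩ := x
  refine (abs_add_le _ _).trans (add_le_add ?_ ?_)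
  · rw [abs_neg, abs_mul, abs_of_nonneg hα]
    exact mul_le_mul_of_nonneg_left (hf _ (hw s a).1 (hw s a).2) hα
  · rw [abs_mul, abs_of_nonneg (hw s a).1]
    refine mul_le_mul (hw s a).2 ?_ (abs_nonneg _) ((hw s a).1.trans (hw s a).2)
    have h1 := abs_le.1 (hv s)
    have h2 := abs_le.1 (hv s')
    have h3 := mul_le_mul_of_nonneg_left h2.1 h.γ_nonneg
    have h4 := mul_le_mul_of_nonneg_left h2.2 h.γ_nonneg
    have h5 := h.r_nonneg s a
    have h6 := h.r_le_one s a
    rw [abs_le, hBe]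
    constructor <;> dsimp only <;> linarith

/-- Uniform accuracy `η` of the empirical Lagrangian makes `what` nearly optimal for the
population Lagrangian at the saddle value function. -/
lemma IsProRLOutput.Lag_sub_le {V : Finset (S → ℝ)} {W : Finset (S → A → ℝ)}
    {D : Fin n → (S × A) × S} {D0 : Fin n0 → S} {vhat : S → ℝ} {what : S → A → ℝ} {η : ℝ}
    (hout : IsProRLOutput r γ f α V W D D0 vhat what)
    (hmin : ∀ v' : S → ℝ, Lag P r μ0 γ dD f α v w ≤ Lag P r μ0 γ dD f α v' w)
    (hv : v ∈ V) (hw : w ∈ W)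
    (hη : ∀ v ∈ V, ∀ w ∈ W,
      |empLag r γ f α D D0 v w - Lag P r μ0 γ dD f α v w| ≤ η) :
    Lag P r μ0 γ dD f α v w - Lag P r μ0 γ dD f α v what ≤ 2 * η := by
  obtain ⟨u, huV, hu⟩ := V.exists_min_image (fun v => empLag r γ f α D D0 v w) ⟨v, hv⟩
  have h1 := hout.2.2.2 w hw u huV hu
  have h2 := hout.2.2.1 v hv
  have h3 := (abs_le.1 (hη v hv what hout.2.1)).2
  have h4 := (abs_le.1 (hη u huV w hw)).1
  have h5 := hmin u
  linarith

end Empirical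

section Concentration

variable {X : Type*} [Fintype X] [MeasurableSpace X] [MeasurableSingletonClass X] {p : X → ℝ}

lemma discMeasure_singleton (p : X → ℝ) (x : X) :
    discMeasure p {x} = ENNReal.ofReal (p x) := by
  classical
  rw [discMeasure, Measure.sum_apply _ (measurableSet_singleton x), tsum_fintype]
  simp [Set.indicator_apply, Finset.sum_ite_eq']

lemma isProbabilityMeasure_discMeasure {X : Type*} [Fintype X] [MeasurableSpace X] {p : X → ℝ}
    (hp : ∀ x, 0 ≤ p x) (hp1 : ∑ x, p x = 1) :
    IsProbabilityMeasure (discMeasure p) := by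
  constructor
  rw [discMeasure, Measure.sum_apply _ MeasurableSet.univ, tsum_fintype]
  simp [← ENNReal.ofReal_sum_of_nonneg fun x _ => hp x, hp1]

lemma integral_discMeasure (hp : ∀ x, 0 ≤ p x) (hp1 : ∑ x, p x = 1) (g : X → ℝ) :
    ∫ x, g x ∂discMeasure p = ∑ x, p x * g x := by
  have := isProbabilityMeasure_discMeasure hp hp1
  rw [integral_fintype .of_finite]
  simp [Measure.real, discMeasure_singleton, hp]

/-- One-sided Hoeffding bound for the empirical mean under a finite discrete law. -/
lemma measure_empirical_mean_sub_ge_le (hp : ∀ x, 0 ≤ p x) (hp1 : ∑ x, p x = 1) {g : X → ℝ}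
    {K t : ℝ} (hK : ∀ x, |g x| ≤ K) (hK0 : 0 < K) (ht : 0 ≤ t) {n : ℕ} (hn : 0 < n) :
    (Measure.pi fun _ : Fin n => discMeasure p).real
        {D | t ≤ (n : ℝ)⁻¹ * ∑ i, g (D i) - ∑ x, p x * g x}
      ≤ Real.exp (-(n * t ^ 2 / (2 * K ^ 2))) := by
  have := isProbabilityMeasure_discMeasure hp hp1
  have hn' : (0 : ℝ) < n := by exact_mod_cast hn
  have hsub := ProbabilityTheory.hasSubgaussianMGF_of_mem_Icc (μ := discMeasure p) (X := g)
    (a := -K) (b := K) (measurable_of_finite g).aemeasurable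
    (Filter.Eventually.of_forall fun x => abs_le.1 (hK x))
  rw [integral_discMeasure hp hp1] at hsub
  have hind := ProbabilityTheory.iIndepFun_pi (μ := fun _ : Fin n => discMeasure p)
    (X := fun _ x => g x - ∑ x, p x * g x) fun _ => (measurable_of_finite _).aemeasurable
  have hsub' : ∀ i ∈ (Finset.univ : Finset (Fin n)), ProbabilityTheory.HasSubgaussianMGF
      (fun D : Fin n → X => g (D i) - ∑ x, p x * g x) ((‖K - -K‖₊ / 2) ^ 2)
      (Measure.pi fun _ : Fin n => discMeasure p) := by
    intro i _
    have hmp := measurePreserving_eval (fun _ : Fin n => discMeasure p) i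
    rw [← hmp.map_eq] at hsub
    exact ProbabilityTheory.HasSubgaussianMGF.of_map hmp.measurable.aemeasurable hsub
  have hH := ProbabilityTheory.HasSubgaussianMGF.measure_sum_ge_le_of_iIndepFun hind hsub'
    (ε := n * t) (by positivity)
  refine le_trans (le_of_eq ?_) (hH.trans (le_of_eq ?_))
  · congr 1
    ext D
    simp only [Set.mem_ofPred_eq, Finset.sum_sub_distrib, Finset.sum_const, Finset.card_univ,
      Fintype.card_fin, nsmul_eq_mul]
    rw [← mul_le_mul_iff_right₀ hn', mul_sub, mul_inv_cancel_left₀ hn'.ne']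
  · congr 1
    have hnorm : ((‖K - -K‖₊ / 2 : NNReal) : ℝ) = K := by
      simp only [NNReal.coe_div, coe_nnnorm, Real.norm_eq_abs, NNReal.coe_ofNat]
      rw [abs_of_pos (by linarith)]
      ring
    simp only [Finset.sum_const, Finset.card_univ, Fintype.card_fin, nsmul_eq_mul,
      NNReal.coe_mul, NNReal.coe_natCast, NNReal.coe_pow, hnorm]
    field_simp

lemma measure_abs_empirical_mean_sub_gt_le (hp : ∀ x, 0 ≤ p x) (hp1 : ∑ x, p x = 1)
    {g : X → ℝ} {K t : ℝ} (hK : ∀ x, |g x| ≤ K) (hK0 : 0 < K) (ht : 0 ≤ t) {n : ℕ}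
    (hn : 0 < n) :
    (Measure.pi fun _ : Fin n => discMeasure p).real
        {D | t < |(n : ℝ)⁻¹ * ∑ i, g (D i) - ∑ x, p x * g x|}
      ≤ 2 * Real.exp (-(n * t ^ 2 / (2 * K ^ 2))) := by
  have := isProbabilityMeasure_discMeasure hp hp1
  have h1 := measure_empirical_mean_sub_ge_le hp hp1 hK hK0 ht hn
  have h2 := measure_empirical_mean_sub_ge_le hp hp1 (g := fun x => -g x)
    (by simpa using hK) hK0 ht hn
  rw [two_mul]
  refine le_trans ?_ (add_le_add h1 h2)
  refine (measureReal_mono ?_).trans (measureReal_union_le _ _)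
  intro D hD
  rcases lt_abs.1 (Set.mem_ofPred_eq ▸ hD) with h | h
  · exact Or.inl h.le
  · right
    simp only [Set.mem_ofPred_eq, mul_neg, Finset.sum_neg_distrib]
    linarith

/-- Uniform deviation over a finite family, at a sample size matched to `log (4 N / δ)`. -/
lemma measure_exists_deviation_le (hp : ∀ x, 0 ≤ p x) (hp1 : ∑ x, p x = 1) {ι : Type*}
    (F : Finset ι) (g : ι → X → ℝ) {K t δ : ℝ} (hK : ∀ i ∈ F, ∀ x, |g i x| ≤ K) (hK0 : 0 < K)
    (ht : 0 ≤ t) (hδ : 0 < δ) {n : ℕ} (hn : 0 < n)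
    (hlog : Real.log (4 * (F.card : ℝ) / δ) ≤ n * t ^ 2 / (2 * K ^ 2)) :
    (Measure.pi fun _ : Fin n => discMeasure p)
        {D | ∃ i ∈ F, t < |(n : ℝ)⁻¹ * ∑ j, g i (D j) - ∑ x, p x * g i x|}
      ≤ ENNReal.ofReal (δ / 2) := by
  have := isProbabilityMeasure_discMeasure hp hp1
  rcases F.eq_empty_or_nonempty with rfl | hF
  · simp
  have hcard : (0 : ℝ) < F.card := by exact_mod_cast hF.card_pos
  rw [← ENNReal.ofReal_toReal (measure_ne_top _ _)]
  refine ENNReal.ofReal_le_ofReal ?_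
  change Measure.real _ _ ≤ _
  have hset : {D : Fin n → X | ∃ i ∈ F, t < |(n : ℝ)⁻¹ * ∑ j, g i (D j) - ∑ x, p x * g i x|}
      = ⋃ i ∈ F, {D | t < |(n : ℝ)⁻¹ * ∑ j, g i (D j) - ∑ x, p x * g i x|} := by
    ext D
    simp
  rw [hset]
  refine (measureReal_biUnion_finset_le _ _).trans ?_
  have hexp : Real.exp (-(n * t ^ 2 / (2 * K ^ 2))) ≤ δ / (4 * F.card) := by
    calc Real.exp (-(n * t ^ 2 / (2 * K ^ 2)))
        ≤ Real.exp (-Real.log (4 * (F.card : ℝ) / δ)) := Real.exp_le_exp.2 (neg_le_neg hlog)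
      _ = δ / (4 * F.card) := by rw [Real.exp_neg, Real.exp_log (by positivity), inv_div]
  calc _ ≤ ∑ _i ∈ F, 2 * (δ / (4 * F.card)) := Finset.sum_le_sum fun i hi =>
        (measure_abs_empirical_mean_sub_gt_le hp hp1 (hK i hi) hK0 ht hn).trans (by linarith)
    _ = δ / 2 := by
        rw [Finset.sum_const, nsmul_eq_mul]
        field_simp
        norm_num

end Concentration

lemma tupleWeight_nonneg {P : S → A → S → ℝ} {r : S → A → ℝ} {μ0 : S → ℝ} {γ : ℝ}
    {dD : S → A → ℝ} (h : MDPAssumptions P r μ0 γ dD) (x : (S × A) × S) :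
    0 ≤ tupleWeight P dD x :=
  mul_nonneg (h.dD_nonneg _ _) (h.P_nonneg _ _ _)

lemma sum_tupleWeight {P : S → A → S → ℝ} {r : S → A → ℝ} {μ0 : S → ℝ} {γ : ℝ}
    {dD : S → A → ℝ} (h : MDPAssumptions P r μ0 γ dD) : ∑ x, tupleWeight P dD x = 1 := by
  simp only [Fintype.sum_prod_type, tupleWeight, ← Finset.mul_sum, h.P_sum, mul_one, h.dD_sum]

/-- With probability `1 - δ` the empirical Lagrangian is uniformly accurate on `V × W`. -/
lemma dataMeasure_uniform_accuracy [MeasurableSpace S] [MeasurableSpace A]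
    [MeasurableSingletonClass S] [MeasurableSingletonClass A]
    {P : S → A → S → ℝ} {r : S → A → ℝ} {μ0 : S → ℝ} {γ : ℝ} {dD : S → A → ℝ}
    (h : MDPAssumptions P r μ0 γ dD) {f : ℝ → ℝ} {α Bw Bf Bv Be δ t t0 : ℝ} (hα : 0 ≤ α)
    (hf : ∀ x, 0 ≤ x → x ≤ Bw → |f x| ≤ Bf) (hBe : Be = (1 + γ) * Bv + 1)
    {V : Finset (S → ℝ)} {W : Finset (S → A → ℝ)}
    (hW : ∀ w ∈ W, ∀ s a, 0 ≤ w s a ∧ w s a ≤ Bw) (hV : ∀ v ∈ V, ∀ s, |v s| ≤ Bv)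
    (hK : 0 < α * Bf + Bw * Be) (hBv : 0 < Bv) (hδ : 0 < δ) (ht : 0 ≤ t) (ht0 : 0 ≤ t0)
    {n n0 : ℕ} (hn : 0 < n) (hn0 : 0 < n0)
    (hlog : Real.log (4 * (V.card : ℝ) * (W.card : ℝ) / δ)
      ≤ n * t ^ 2 / (2 * (α * Bf + Bw * Be) ^ 2))
    (hlog0 : Real.log (4 * (V.card : ℝ) / δ) ≤ n0 * t0 ^ 2 / (2 * Bv ^ 2)) :
    1 - ENNReal.ofReal δ ≤ dataMeasure P dD μ0 n n0 {ω | ∀ v ∈ V, ∀ w ∈ W,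
      |empLag r γ f α ω.1 ω.2 v w - Lag P r μ0 γ dD f α v w| ≤ (1 - γ) * t0 + t} := by
  have := isProbabilityMeasure_discMeasure (tupleWeight_nonneg h) (sum_tupleWeight h)
  have := isProbabilityMeasure_discMeasure (fun s => (h.μ0_pos s).le) h.μ0_sum
  have hprob : IsProbabilityMeasure (dataMeasure P dD μ0 n n0) := by
    unfold dataMeasure
    infer_instance
  have hbad := measure_exists_deviation_le (tupleWeight_nonneg h) (sum_tupleWeight h) (V ×ˢ W)
    (fun i => tupleTerm r γ f α i.1 i.2) (K := α * Bf + Bw * Be)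
    (fun i hi => abs_tupleTerm_le h hα hf hBe (hW _ (Finset.mem_product.1 hi).2)
      (hV _ (Finset.mem_product.1 hi).1)) hK ht hδ hn
    (by rw [Finset.card_product]; push_cast; rwa [← mul_assoc])
  have hbad0 := measure_exists_deviation_le (fun s => (h.μ0_pos s).le) h.μ0_sum V
    (fun v => v) hV hBv ht0 hδ hn0 hlog0
  set B : Set (Fin n → (S × A) × S) := {D | ∃ i ∈ V ×ˢ W, t < |(n : ℝ)⁻¹ *
    ∑ j, tupleTerm r γ f α i.1 i.2 (D j)
      - ∑ x, tupleWeight P dD x * tupleTerm r γ f α i.1 i.2 x|} with hB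
  set B0 : Set (Fin n0 → S) := {D | ∃ v ∈ V, t0 < |(n0 : ℝ)⁻¹ *
    ∑ j, v (D j) - ∑ s, μ0 s * v s|} with hB0
  have hmeas : dataMeasure P dD μ0 n n0 (B ×ˢ Set.univ ∪ Set.univ ×ˢ B0)
      ≤ ENNReal.ofReal δ := by
    refine (measure_union_le _ _).trans ?_
    rw [dataMeasure, Measure.prod_prod, Measure.prod_prod, measure_univ, measure_univ, mul_one,
      one_mul]
    refine (add_le_add hbad hbad0).trans (le_of_eq ?_)
    rw [← ENNReal.ofReal_add (by positivity) (by positivity), add_halves]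
  refine (tsub_le_tsub_left hmeas 1).trans ?_
  rw [← prob_compl_eq_one_sub (Set.toFinite _).measurableSet]
  refine measure_mono ?_
  rintro ⟨D, D0⟩ hω v hv w hw
  simp only [Set.mem_compl_iff, Set.mem_union, Set.mem_prod, Set.mem_univ, and_true, true_and,
    not_or, hB, hB0, Set.mem_ofPred_eq, not_exists, not_and, not_lt] at hω
  have h1 := hω.1 (v, w) (Finset.mem_product.2 ⟨hv, hw⟩)
  have h2 := hω.2 v hv
  have hγ : 0 ≤ 1 - γ := sub_nonneg.2 h.γ_lt_one.le
  rw [empLag_eq, Lag_eq h]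
  dsimp only at h1 ⊢
  rw [add_sub_add_comm, ← mul_sub]
  refine (abs_add_le _ _).trans (add_le_add ?_ h1)
  rw [abs_mul, abs_of_nonneg hγ]
  exact mul_le_mul_of_nonneg_left h2 hγ

/-- A Lagrangian gap of order `α M_f ((1 - γ) ε)²` costs at most `ε / 2` in return. -/
lemma IsSaddleB.Jret_extractPolicy_sub_le_half [Nonempty A] {P : S → A → S → ℝ}
    {r : S → A → ℝ} {μ0 : S → ℝ} {γ : ℝ} {dD w w' : S → A → ℝ} {f : ℝ → ℝ}
    {α Bw Mf ε : ℝ} {v : S → ℝ} (h : MDPAssumptions P r μ0 γ dD)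
    (hf : StrongConvexOn Set.univ Mf f) (hMf : 0 < Mf) (hα : 0 < α) (hε : 0 < ε)
    (hsad : IsSaddleB P r μ0 γ dD f α Bw v w) (hw' : ∀ s a, 0 ≤ w' s a ∧ w' s a ≤ Bw)
    (hgap : Lag P r μ0 γ dD f α v w - Lag P r μ0 γ dD f α v w'
      ≤ α * Mf / 4 * ((1 - γ) * ε / 4) ^ 2) :
    Jret P r μ0 γ (extractPolicy (behPolicy dD) w)
      - Jret P r μ0 γ (extractPolicy (behPolicy dD) w') ≤ ε / 2 := by
  have hγ : 0 < 1 - γ := sub_pos.2 h.γ_lt_one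
  have hsq := le_of_mul_le_mul_left
    ((hsad.quadratic_growth h hf hα.le hw').trans hgap) (by positivity)
  have hl1 := abs_le_of_sq_le_sq' ((sq_sum_mul_abs_le h fun s a => w s a - w' s a).trans hsq)
    (by positivity)
  have hJ := Jret_extractPolicy_sub_le h (fun s a => (hsad.1 s a).1)
    (bellmanFlow_of_forall_Lag_le hsad.2.1) fun s a => (hw' s a).1
  refine le_of_mul_le_mul_left (hJ.trans ?_) hγ
  linarith [hl1.2]

lemma le_mul_of_mul_le_of_mul_eq_one {a c x y : ℝ} (hc : 0 ≤ c) (hxy : a * x ≤ y)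
    (hac : a * c = 1) : x ≤ y * c := by
  calc x = a * x * c := by rw [mul_right_comm, hac, one_mul]
    _ ≤ y * c := mul_le_mul_of_nonneg_right hxy hc

/-- Corollary 3: competing with the best `B_w`-covered policy. -/
theorem stmt7 :
    ∃ C1 : ℝ, 0 < C1 ∧
    ∀ (S A : Type) [Fintype S] [Fintype A] [Nonempty S] [Nonempty A]
      [MeasurableSpace S] [MeasurableSpace A]
      [MeasurableSingletonClass S] [MeasurableSingletonClass A]
      (P : S → A → S → ℝ) (r : S → A → ℝ) (μ0 : S → ℝ) (γ : ℝ) (dD : S → A → ℝ),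
      MDPAssumptions P r μ0 γ dD →
      -- the data distribution is the occupancy of the behavior policy
      (∀ s a, dD s a = occ P μ0 γ (behPolicy dD) s a) →
      ∀ (f f' : ℝ → ℝ) (ε δ Bw : ℝ), 0 < ε → 0 < δ → δ < 1 → 1 < Bw →
      ∀ (Mf Bf' Bf Bv Be : ℝ), 0 < Bf →
      -- regularity of f on [0, B_w], with α'_ε := ε/(4 B_f)
      RegAssumptions f f' Mf Bw Bf' Bf →
      Bv = (ε / (4 * Bf) * Bf' + 1) / (1 - γ) → Be = (1 + γ) * Bv + 1 →
      -- saddle point of the constrained LP at α = 0 (defines π*_{0,B_w})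
      ∀ (v0st : S → ℝ) (w0st : S → A → ℝ),
        IsSaddleB P r μ0 γ dD f 0 Bw v0st w0st →
      -- saddle point of the constrained LP at α = α'_ε, with realizability
      ∀ (vst : S → ℝ) (wst : S → A → ℝ),
        IsSaddleB P r μ0 γ dD f (ε / (4 * Bf)) Bw vst wst →
      ∀ (V : Finset (S → ℝ)) (W : Finset (S → A → ℝ)),
        vst ∈ V → wst ∈ W →
        (∀ w ∈ W, ∀ s a, 0 ≤ w s a ∧ w s a ≤ Bw) →
        (∀ v ∈ V, ∀ s, |v s| ≤ Bv) →
      ∀ (n n0 : ℕ), 0 < n → 0 < n0 →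
        C1 * (ε * Bf + 4 * Bw * Be * Bf) ^ 2 / (ε ^ 6 * Mf ^ 2 * (1 - γ) ^ 4)
            * Real.log (4 * (V.card : ℝ) * (W.card : ℝ) / δ) ≤ (n : ℝ) →
        C1 * (4 * Bv * Bf) ^ 2 / (ε ^ 6 * Mf ^ 2 * (1 - γ) ^ 2)
            * Real.log (4 * (V.card : ℝ) / δ) ≤ (n0 : ℝ) →
      ∀ (vhat : (Fin n → (S × A) × S) × (Fin n0 → S) → S → ℝ)
        (what : (Fin n → (S × A) × S) × (Fin n0 → S) → S → A → ℝ),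
        (∀ ω, IsProRLOutput r γ f (ε / (4 * Bf)) V W ω.1 ω.2 (vhat ω) (what ω)) →
        1 - ENNReal.ofReal δ ≤
          dataMeasure P dD μ0 n n0 {ω |
            Jret P r μ0 γ (extractPolicy (behPolicy dD) w0st)
              - Jret P r μ0 γ (extractPolicy (behPolicy dD) (what ω)) ≤ ε } := by
  refine ⟨2 ^ 17, by norm_num, ?_⟩
  intro S A _ _ _ _ _ _ _ _ P r μ0 γ dD h _ f f' ε δ Bw hε hδ _ hBw Mf Bf' Bf Bv Be hBf hf hBv
    hBe v0st w0st hsad0 vst wst hsad V W hvst hwst hW hV n n0 hn hn0 hnle hn0le vhat what hout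
  have hγ : 0 < 1 - γ := sub_pos.2 h.γ_lt_one
  have hMf := hf.Mf_pos
  have hα : 0 < ε / (4 * Bf) := by positivity
  have hBf' : 0 ≤ Bf' := (abs_nonneg _).trans (hf.f'_bdd 0 le_rfl (by linarith))
  have hBv0 : 0 < Bv := by rw [hBv]; positivity
  have hBe0 : 0 < Be := by rw [hBe]; nlinarith [h.γ_nonneg]
  have hBw0 : 0 < Bw := by linarith
  set t : ℝ := ε ^ 3 * (1 - γ) ^ 2 * Mf / (1024 * Bf) with ht
  set t0 : ℝ := ε ^ 3 * (1 - γ) * Mf / (1024 * Bf) with ht0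
  refine (dataMeasure_uniform_accuracy h hα.le hf.f_bdd hBe hW hV (by positivity) hBv0 hδ
    (t := t) (t0 := t0) (by positivity) (by positivity) hn hn0 ?_ ?_).trans (measure_mono ?_)
  · refine le_mul_of_mul_le_of_mul_eq_one (c := t ^ 2 / (2 * (ε / (4 * Bf) * Bf + Bw * Be) ^ 2))
      (by positivity) hnle ?_ |>.trans_eq (mul_div_assoc _ _ _).symm
    rw [ht, show ε / (4 * Bf) * Bf + Bw * Be = (ε * Bf + 4 * Bw * Be * Bf) / (4 * Bf) by
      field_simp]
    have hX : 0 < ε * Bf + 4 * Bw * Be * Bf := by positivity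
    field_simp
    norm_num
  · refine le_mul_of_mul_le_of_mul_eq_one (c := t0 ^ 2 / (2 * Bv ^ 2))
      (by positivity) hn0le ?_ |>.trans_eq (mul_div_assoc _ _ _).symm
    rw [ht0]
    field_simp
    norm_num
  · intro ω hω
    have hgap := (hout ω).Lag_sub_le hsad.2.1 hvst hwst hω
    have hwhat := hW _ (hout ω).2.1
    have hbias := hsad0.regularization_bias h hf hα.le hsad
    have hstat := hsad.Jret_extractPolicy_sub_le_half h hf.strong hMf hα hε hwhat
      (hgap.trans (le_of_eq (by rw [ht, ht0]; field_simp; norm_num)))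
    have e : 2 * (ε / (4 * Bf)) * Bf = ε / 2 := by field_simp; norm_num
    rw [e] at hbias
    change _ ≤ ε
    linarith
end ProRL
end

section
/- Suppose d*_α(s,a)/d^D(s,a) ≤ B_{w,α} for all (s,a) and f satisfies |f'(x)| ≤ B_{f',α} for 0 ≤ x ≤ B_{w,α}. Then ‖v*_α‖_∞ ≤ (α·B_{f',α} + 1)/(1−γ). -/
open MeasureTheory
open scoped BigOperators ENNReal

namespace ProRL

variable {S A : Type*} [Fintype S] [Fintype A]

/-- The Lagrangian splits into a part depending only on `v` and a sum of functions of the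
individual weights `w s a`. -/
theorem Lag_eq_sum (P : S → A → S → ℝ) (r : S → A → ℝ) (μ0 : S → ℝ) (γ : ℝ)
    (dD : S → A → ℝ) (f : ℝ → ℝ) (α : ℝ) (v : S → ℝ) (w : S → A → ℝ) :
    Lag P r μ0 γ dD f α v w = (1 - γ) * ∑ s : S, μ0 s * v s
      + ∑ s : S, ∑ a : A, dD s a * (w s a * eV P r γ v s a - α * f (w s a)) := by
  have h : ∑ s : S, ∑ a : A, dD s a * (w s a * eV P r γ v s a - α * f (w s a))
      = ∑ s : S, ∑ a : A, dD s a * (w s a * eV P r γ v s a)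
        - α * ∑ s : S, ∑ a : A, dD s a * f (w s a) := by
    simp only [Finset.mul_sum, ← Finset.sum_sub_distrib]
    refine Finset.sum_congr rfl fun s _ => Finset.sum_congr rfl fun a _ => ?_
    ring
  rw [h, Lag]
  ring

/-- At a saddle point each weight maximizes its own summand of the Lagrangian. -/
theorem IsSaddle.pointwise_le {P : S → A → S → ℝ} {r : S → A → ℝ} {μ0 : S → ℝ} {γ : ℝ}
    {dD : S → A → ℝ} {f : ℝ → ℝ} {α : ℝ} {v : S → ℝ} {w : S → A → ℝ}
    (h : IsSaddle P r μ0 γ dD f α v w) {s : S} {a : A} (hd : 0 < dD s a) {x : ℝ}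
    (hx : 0 ≤ x) :
    x * eV P r γ v s a - α * f x ≤ w s a * eV P r γ v s a - α * f (w s a) := by
  classical
  let w' : S → A → ℝ := fun s' a' => if s' = s ∧ a' = a then x else w s' a'
  have hw' : ∀ s' a', 0 ≤ w' s' a' := by
    intro s' a'
    simp only [w']
    split_ifs
    exacts [hx, h.1 s' a']
  have hle := h.2.2 w' hw'
  rw [Lag_eq_sum, Lag_eq_sum, add_le_add_iff_left, ← sub_nonpos] at hle
  simp only [← Finset.sum_sub_distrib] at hle
  rw [Finset.sum_eq_single s, Finset.sum_eq_single a] at hle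
  · simp only [w', and_self, if_true] at hle
    rw [← mul_sub] at hle
    exact sub_nonpos.1 (nonpos_of_mul_nonpos_right hle hd)
  · intro a' _ ha'
    simp [w', ha']
  · simp
  · intro s' _ hs'
    simp [w', hs']
  · simp

/-- First-order optimality at a saddle point: on the support of `w · d^D` the Bellman residual
is `α f'(w)`. -/
theorem IsSaddle.eV_eq {P : S → A → S → ℝ} {r : S → A → ℝ} {μ0 : S → ℝ} {γ : ℝ}
    {dD : S → A → ℝ} {f f' : ℝ → ℝ} {α : ℝ} {v : S → ℝ} {w : S → A → ℝ}
    (h : IsSaddle P r μ0 γ dD f α v w) {s : S} {a : A} (hd : 0 < dD s a) (hw : 0 < w s a)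
    (hf : HasDerivAt f (f' (w s a)) (w s a)) :
    eV P r γ v s a = α * f' (w s a) := by
  have hmax : IsLocalMax (fun x => x * eV P r γ v s a - α * f x) (w s a) := by
    filter_upwards [lt_mem_nhds hw] with x hx using h.pointwise_le hd hx.le
  have hder := ((hasDerivAt_id (w s a)).mul_const (eV P r γ v s a)).sub (hf.const_mul α)
  have h0 := hmax.hasDerivAt_eq_zero hder
  linarith

/-- A nonnegative solution of the Bellman flow equations charges every state. -/
theorem BellmanFlow.exists_pos {P : S → A → S → ℝ} {r : S → A → ℝ} {μ0 : S → ℝ} {γ : ℝ}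
    {dD d : S → A → ℝ} (hMDP : MDPAssumptions P r μ0 γ dD) (hflow : BellmanFlow P μ0 γ d)
    (hd : ∀ s a, 0 ≤ d s a) (s : S) : ∃ a, 0 < d s a := by
  have hin : 0 ≤ γ * ∑ s' : S, ∑ a' : A, P s' a' s * d s' a' :=
    mul_nonneg hMDP.γ_nonneg <| Finset.sum_nonneg fun s' _ => Finset.sum_nonneg fun a' _ =>
      mul_nonneg (hMDP.P_nonneg s' a' s) (hd s' a')
  have hinit := mul_pos (sub_pos.2 hMDP.γ_lt_one) (hMDP.μ0_pos s)
  have hpos : ∑ a : A, (0 : ℝ) < ∑ a : A, d s a := by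
    rw [Finset.sum_const_zero, hflow s]
    linarith
  obtain ⟨a, -, ha⟩ := Finset.exists_lt_of_sum_lt hpos
  exact ⟨a, ha⟩

/-- If every state has an action with Bellman residual at most `B` in absolute value, then `v` is
bounded by `(B + 1) / (1 - γ)`. -/
theorem MDPAssumptions.abs_le_of_abs_eV_le [Nonempty S] {P : S → A → S → ℝ} {r : S → A → ℝ}
    {μ0 : S → ℝ} {γ : ℝ} {dD : S → A → ℝ} (hMDP : MDPAssumptions P r μ0 γ dD) {v : S → ℝ}
    {B : ℝ} (h : ∀ s, ∃ a, |eV P r γ v s a| ≤ B) (s : S) : |v s| ≤ (B + 1) / (1 - γ) := by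
  obtain ⟨m, hm⟩ := Finite.exists_max fun s => |v s|
  obtain ⟨a, ha⟩ := h m
  have hP : |∑ s' : S, P m a s' * v s'| ≤ |v m| := by
    calc |∑ s' : S, P m a s' * v s'| ≤ ∑ s' : S, |P m a s' * v s'| :=
          Finset.abs_sum_le_sum_abs _ _
      _ ≤ ∑ s' : S, P m a s' * |v m| := by
          refine Finset.sum_le_sum fun s' _ => ?_
          rw [abs_mul, abs_of_nonneg (hMDP.P_nonneg m a s')]
          exact mul_le_mul_of_nonneg_left (hm s') (hMDP.P_nonneg m a s')
      _ = |v m| := by rw [← Finset.sum_mul, hMDP.P_sum, one_mul]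
  rw [le_div_iff₀ (sub_pos.2 hMDP.γ_lt_one)]
  refine (mul_le_mul_of_nonneg_right (hm s) (sub_pos.2 hMDP.γ_lt_one).le).trans ?_
  have hγ := mul_le_mul_of_nonneg_left hP hMDP.γ_nonneg
  have hv : v m = r m a + γ * ∑ s' : S, P m a s' * v s' - eV P r γ v m a := by
    rw [eV]
    ring
  have habs : |v m| ≤ |r m a| + |γ * ∑ s' : S, P m a s' * v s'| + |eV P r γ v m a| := by
    calc |v m| = |r m a + γ * ∑ s' : S, P m a s' * v s' - eV P r γ v m a| :=
          congrArg abs hv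
      _ ≤ _ := (abs_sub _ _).trans (by gcongr; exact abs_add_le _ _)
  rw [abs_of_nonneg (hMDP.r_nonneg m a), abs_mul, abs_of_nonneg hMDP.γ_nonneg] at habs
  have hr := hMDP.r_le_one m a
  linarith

/-- Lemma 4: boundedness of `v*_α`. -/
theorem stmt12
    {S A : Type*} [Fintype S] [Fintype A] [Nonempty S] [Nonempty A]
    (P : S → A → S → ℝ) (r : S → A → ℝ) (μ0 : S → ℝ) (γ : ℝ) (dD : S → A → ℝ)
    (hMDP : MDPAssumptions P r μ0 γ dD)
    (f f' : ℝ → ℝ) (α Mf Bw Bf' : ℝ) (hα : 0 < α)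
    (hderiv : ∀ x, HasDerivAt f (f' x) x) (hMf : 0 < Mf)
    (hsc : StrongConvexOn Set.univ Mf f)
    (hBf' : ∀ x, 0 ≤ x → x ≤ Bw → |f' x| ≤ Bf')
    (vst : S → ℝ) (wst : S → A → ℝ)
    (hsad : IsSaddle P r μ0 γ dD f α vst wst)
    -- d*_α = w*_α · d^D satisfies the Bellman flow equations
    (hflow : BellmanFlow P μ0 γ (dstar dD wst))
    -- (A1): d*_α / d^D ≤ B_{w,α}
    (hA1 : ∀ s a, dstar dD wst s a ≤ Bw * dD s a) :
    ∀ s, |vst s| ≤ (α * Bf' + 1) / (1 - γ) := by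
  refine hMDP.abs_le_of_abs_eV_le fun s => ?_
  have hd : ∀ s a, 0 ≤ dstar dD wst s a := fun s a =>
    mul_nonneg (hsad.1 s a) (hMDP.dD_nonneg s a)
  obtain ⟨a, ha⟩ := hflow.exists_pos hMDP hd s
  have hdD : 0 < dD s a := pos_of_mul_pos_right ha (hsad.1 s a)
  have hw : 0 < wst s a := pos_of_mul_pos_left ha (hMDP.dD_nonneg s a)
  have hwB : wst s a ≤ Bw := le_of_mul_le_mul_right (hA1 s a) hdD
  refine ⟨a, ?_⟩
  rw [hsad.eV_eq hdD hw (hderiv _), abs_mul, abs_of_pos hα]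
  exact mul_le_mul_of_nonneg_left (hBf' _ hw.le hwB) hα.le
end ProRL
end
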